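/- Let E be an n-dimensional real subspace of ℂⁿ, and let φ : ℝⁿ → ℂⁿ be an injective real-linear map such that E ⊕ Im(φ) = ℂⁿ (as real vector spaces). Let Ψ be a holomorphic (entire) function on ℂⁿ such that for every compact set K ⊆ E, sup_{a ∈ K} ∫_{ℝⁿ} |Ψ(a + φ(t))| dt < ∞. Then the function I(a) = ∫_{ℝⁿ} Ψ(a + φ(t)) dt is constant on E. -/

import Mathlib

open MeasureTheory Real Complex

noncomputable section

/-!
Integrals along `z + φ(V)` are finite locally uniformly in `z ∈ W`, not only in `z ∈ E`, because a
translation along `φ(V)` is absorbed by the integration variable. For a direction `s`, Cauchy's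
theorem for `w ↦ Ψ (z + w • φ s + φ t)` on the unit square, integrated over `t`, shows that `z` may
be moved by `i • φ s`: the two vertical sides differ by the translation `t ↦ t + s`, so they cancel,
while by Fubini the horizontal sides contribute the integrals at `z` and `z + i • φ s`.

If `φ(V) + i φ(V)` is the whole space, this already proves constancy. Otherwise, by dimension,
`φ(V)` contains a complex line, and then every one of these integrals vanishes: by the mean value
property the `L¹` norm of the integrand on a compact set is at most the average of its `L¹` norms
on translates of that set along arbitrarily large circles in the line, and these tend to zero.
-/

open Filter Set Topology
open scoped ENNReal Interval

section Fubini

variable {α F : Type*} [MeasurableSpace α] {μ : Measure α} [SFinite μ] [NormedAddCommGroup F]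

lemma integrable_prod_of_lintegral_enorm_le {β : Type*} [MeasurableSpace β] {ν : Measure β}
    (hν : ν univ < ⊤) {f : β × α → F} (hf : AEStronglyMeasurable f (ν.prod μ)) {C : ℝ≥0∞}
    (hC : C < ⊤) (hfC : ∀ᵐ x ∂ν, ∫⁻ t, ‖f (x, t)‖ₑ ∂μ ≤ C) : Integrable f (ν.prod μ) := by
  refine ⟨hf, ?_⟩
  calc ∫⁻ p, ‖f p‖ₑ ∂ν.prod μ = ∫⁻ x, ∫⁻ t, ‖f (x, t)‖ₑ ∂μ ∂ν := lintegral_prod _ hf.enorm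
    _ ≤ ∫⁻ _, C ∂ν := lintegral_mono_ae hfC
    _ = C * ν univ := lintegral_const C
    _ < ⊤ := ENNReal.mul_lt_top hC hν

lemma integrable_intervalIntegral_of_integrable_prod [NormedSpace ℝ F] {a b : ℝ} {f : ℝ × α → F}
    (hf : Integrable f ((volume.restrict (Ι a b)).prod μ)) :
    Integrable (fun t => ∫ x in a..b, f (x, t)) μ := by
  simp only [intervalIntegral.intervalIntegral_eq_integral_uIoc]
  exact hf.integral_prod_right.smul _

end Fubini

section Translation

variable {V F : Type*} [NormedAddCommGroup V] [NormedSpace ℝ V] [SecondCountableTopology V]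
  [MeasurableSpace V] [BorelSpace V] {μ : Measure V} [SFinite μ] [μ.IsAddRightInvariant]
  [NormedAddCommGroup F] {f : V → F}

lemma integrable_prod_comp_add_smul (hc : Continuous f) (hf : Integrable f μ) (s : V) (a b : ℝ) :
    Integrable (fun p : ℝ × V => f (p.2 + p.1 • s)) ((volume.restrict (Ι a b)).prod μ) :=
  integrable_prod_of_lintegral_enorm_le (by simp) (by fun_prop) hf.2 <| ae_of_all _ fun x =>
    (lintegral_add_right_eq_self (fun t => ‖f t‖ₑ) (x • s)).le

lemma integral_intervalIntegral_comp_add_smul [NormedSpace ℝ F] [CompleteSpace F]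
    (hc : Continuous f) (hf : Integrable f μ) (s : V) (a b : ℝ) :
    ∫ t, (∫ x in a..b, f (t + x • s)) ∂μ = (b - a) • ∫ t, f t ∂μ := by
  rw [← intervalIntegral_integral_swap (f := fun x t => f (t + x • s))
    (integrable_prod_comp_add_smul hc hf s a b)]
  simp only [integral_add_right_eq_self, intervalIntegral.integral_const]

end Translation

section ContourShift

lemma intervalIntegral_boundary_unitSquare_eq {F : Type*} [NormedAddCommGroup F]
    [NormedSpace ℂ F] {f : ℂ → F} (hf : Differentiable ℂ f) :
    (∫ x : ℝ in 0..1, f x) + I • (∫ y : ℝ in 0..1, f (y * I + 1)) =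
      (∫ x : ℝ in 0..1, f (I + x)) + I • ∫ y : ℝ in 0..1, f (y * I) := by
  have h := integral_boundary_rect_eq_zero_of_differentiableOn f 0 (1 + I) hf.differentiableOn
  rw [← sub_eq_zero, ← h]
  simp only [zero_re, zero_im, add_re, add_im, one_re, one_im, I_re, I_im, ofReal_zero,
    ofReal_one, zero_mul, one_mul, add_zero, zero_add, add_comm]
  abel

variable {V F : Type*} [NormedAddCommGroup V] [NormedSpace ℝ V] [SecondCountableTopology V]
  [MeasurableSpace V] [BorelSpace V] {μ : Measure V} [SFinite μ] [μ.IsAddRightInvariant]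
  [NormedAddCommGroup F] [NormedSpace ℂ F] [CompleteSpace F]

lemma integral_I_eq_integral_zero_of_translation {g : ℂ → V → F}
    (hg : Continuous (Function.uncurry g)) (hd : ∀ t, Differentiable ℂ fun w => g w t) {s : V}
    (hs : ∀ w (x : ℝ) t, g (w + x) t = g w (t + x • s)) {C : ℝ≥0∞} (hC : C < ⊤)
    (hgC : ∀ y ∈ Icc (0 : ℝ) 1, ∫⁻ t, ‖g (y * I) t‖ₑ ∂μ ≤ C) :
    ∫ t, g I t ∂μ = ∫ t, g 0 t ∂μ := by
  have hgc (w : ℂ) : Continuous (g w) := by fun_prop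
  have hint (y : ℝ) (hy : y ∈ Icc 0 1) : Integrable (g (y * I)) μ :=
    ⟨(hgc _).aestronglyMeasurable, (hgC y hy).trans_lt hC⟩
  have hbot : Integrable (g 0) μ := by simpa using hint 0 (by simp)
  have htop : Integrable (g I) μ := by simpa using hint 1 (by simp)
  let avg (w : ℂ) (t : V) : F := ∫ x in 0..1, g w (t + x • s)
  have havg {w : ℂ} (hw : Integrable (g w) μ) : Integrable (avg w) μ :=
    integrable_intervalIntegral_of_integrable_prod (integrable_prod_comp_add_smul (hgc w) hw s 0 1)
  have integral_avg {w : ℂ} (hw : Integrable (g w) μ) : ∫ t, avg w t ∂μ = ∫ t, g w t ∂μ := by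
    simpa using integral_intervalIntegral_comp_add_smul (hgc w) hw s 0 1
  let side (t : V) : F := ∫ y : ℝ in 0..1, g (y * I) t
  have hside : Integrable side μ := by
    refine integrable_intervalIntegral_of_integrable_prod (f := fun p => g (p.1 * I) p.2) <|
      integrable_prod_of_lintegral_enorm_le (by simp)
        (Continuous.aestronglyMeasurable (by fun_prop)) hC ?_
    filter_upwards [ae_restrict_mem measurableSet_uIoc] with y hy
    exact hgC y (Ioc_subset_Icc_self (by simpa using hy))
  have hI : Integrable (fun t => I • side t) μ := hside.smul I
  have cauchy (t : V) : avg 0 t + I • side (t + s) = avg I t + I • side t := by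
    have hs_one (w : ℂ) : g w (t + s) = g (w + 1) t := by simpa using (hs w 1 t).symm
    simpa [avg, side, ← hs, hs_one] using intervalIntegral_boundary_unitSquare_eq (hd t)
  refine (add_right_cancel (b := I • ∫ t, side t ∂μ) ?_).symm
  calc ∫ t, g 0 t ∂μ + I • ∫ t, side t ∂μ = ∫ t, (avg 0 t + I • side (t + s)) ∂μ := by
        rw [integral_add (havg hbot) (hI.comp_add_right s), integral_smul,
          integral_add_right_eq_self, integral_avg hbot]
    _ = ∫ t, (avg I t + I • side t) ∂μ := by simp only [cauchy]
    _ = ∫ t, g I t ∂μ + I • ∫ t, side t ∂μ := by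
        rw [integral_add (havg htop) hI, integral_smul, integral_avg htop]

end ContourShift

section Translates

lemma tendsto_preimage_sub_smallSets_cocompact {G : Type*} [TopologicalSpace G]
    [AddGroup G] [IsTopologicalAddGroup G] {K : Set G} (hK : IsCompact K) :
    Tendsto (fun v => (· - v) ⁻¹' K) (cocompact G) (cocompact G).smallSets := by
  rw [tendsto_smallSets_iff]
  intro s hs
  obtain ⟨L, hL, hLs⟩ := mem_cocompact.1 hs
  filter_upwards [(hK.neg.add hL).compl_mem_cocompact] with v hv t ht
  exact hLs fun htL => hv ⟨-(t - v), by simpa using ht, t, htL, by simp⟩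

lemma setLIntegral_comp_add_right {G : Type*} [AddGroup G] [MeasurableSpace G] [MeasurableAdd G]
    {μ : Measure G} [μ.IsAddRightInvariant] (f : G → ℝ≥0∞) (s : Set G) (v : G) :
    ∫⁻ t in s, f (t + v) ∂μ = ∫⁻ t in (· - v) ⁻¹' s, f t ∂μ := by
  simpa [preimage_preimage] using (measurePreserving_add_right μ v).setLIntegral_comp_preimage_emb
    (measurableEmbedding_addRight v) f ((· - v) ⁻¹' s)

lemma tendsto_setLIntegral_comp_add_cocompact {V : Type*} [NormedAddCommGroup V] [CompleteSpace V]
    [SecondCountableTopology V] [MeasurableSpace V] [BorelSpace V] {μ : Measure V}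
    [μ.IsAddRightInvariant] {f : V → ℝ≥0∞} (hf : ∫⁻ t, f t ∂μ ≠ ⊤) {K : Set V}
    (hK : IsCompact K) : Tendsto (fun v => ∫⁻ t in K, f (t + v) ∂μ) (cocompact V) (𝓝 0) := by
  have := isFiniteMeasure_withDensity hf
  have htight : Tendsto (μ.withDensity f) (cocompact V).smallSets (𝓝 0) := by
    simpa [IsTightMeasureSet] using isTightMeasureSet_singleton (μ := μ.withDensity f)
  refine (htight.comp (tendsto_preimage_sub_smallSets_cocompact hK)).congr fun v => ?_
  rw [Function.comp_apply, setLIntegral_comp_add_right,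
    withDensity_apply _ (hK.measurableSet.preimage (measurable_sub_const v))]

end Translates

section Vanishing

lemma enorm_le_laverage_circleMap {F : Type*} [NormedAddCommGroup F] [NormedSpace ℂ F]
    [CompleteSpace F] {f : ℂ → F} {c : ℂ} {R : ℝ} (hf : DiffContOnCl ℂ f (Metric.ball c |R|)) :
    ‖f c‖ₑ ≤ ⨍⁻ θ in Ioc 0 (2 * π), ‖f (circleMap c R θ)‖ₑ ∂volume := by
  rw [← hf.circleAverage, circleAverage_eq_intervalAverage, uIoc_of_le two_pi_pos.le]
  exact enorm_integral_le_lintegral_enorm _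

variable {V F : Type*} [NormedAddCommGroup V] [NormedSpace ℝ V] [FiniteDimensional ℝ V]
  [MeasurableSpace V] [BorelSpace V] {μ : Measure V} [μ.IsAddHaarMeasure]
  [NormedAddCommGroup F] [NormedSpace ℂ F] [CompleteSpace F]

lemma setLIntegral_enorm_le_laverage_circleMap {f : V → F} (hc : Continuous f) {u : ℂ →ₗ[ℝ] V}
    (hd : ∀ t, Differentiable ℂ fun w => f (t + u w)) (K : Set V) (R : ℝ) :
    ∫⁻ t in K, ‖f t‖ₑ ∂μ ≤
      ⨍⁻ θ in Ioc 0 (2 * π), (∫⁻ t in K, ‖f (t + u (circleMap 0 R θ))‖ₑ ∂μ) ∂volume := by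
  have hu : Continuous u := u.continuous_of_finiteDimensional
  calc ∫⁻ t in K, ‖f t‖ₑ ∂μ
      ≤ ∫⁻ t in K, (⨍⁻ θ in Ioc 0 (2 * π), ‖f (t + u (circleMap 0 R θ))‖ₑ ∂volume) ∂μ :=
        lintegral_mono fun t => by
          simpa using enorm_le_laverage_circleMap (R := R) (hd t).diffContOnCl (c := 0)
    _ = ⨍⁻ θ in Ioc 0 (2 * π), (∫⁻ t in K, ‖f (t + u (circleMap 0 R θ))‖ₑ ∂μ) ∂volume :=
        lintegral_lintegral_swap (by
          apply Continuous.aemeasurable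
          simp only [Function.uncurry_def]
          fun_prop)

lemma setLIntegral_enorm_eq_zero_of_differentiable_comp_add {f : V → F} (hc : Continuous f)
    (hf : Integrable f μ) {u : ℂ →ₗ[ℝ] V} (hu : Function.Injective u)
    (hd : ∀ t, Differentiable ℂ fun w => f (t + u w)) {K : Set V} (hK : IsCompact K) :
    ∫⁻ t in K, ‖f t‖ₑ ∂μ = 0 := by
  have hlim : Tendsto (fun w => ∫⁻ t in K, ‖f (t + u w)‖ₑ ∂μ) (cocompact ℂ) (𝓝 0) :=
    (tendsto_setLIntegral_comp_add_cocompact hf.2.ne hK).comp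
      (u.isClosedEmbedding_of_injective (LinearMap.ker_eq_bot.2 hu)).tendsto_cocompact
  refine nonpos_iff_eq_zero.1 (le_of_forall_gt_imp_ge_of_dense fun ε hε => ?_)
  rw [← Metric.cobounded_eq_cocompact, ← comap_norm_atTop] at hlim
  obtain ⟨R, hR, hRε⟩ := ((eventually_ge_atTop 0).and
    (eventually_comap.1 (hlim.eventually_le_const hε))).exists
  calc ∫⁻ t in K, ‖f t‖ₑ ∂μ
      ≤ ⨍⁻ θ in Ioc 0 (2 * π), (∫⁻ t in K, ‖f (t + u (circleMap 0 R θ))‖ₑ ∂μ) ∂volume :=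
        setLIntegral_enorm_le_laverage_circleMap hc hd K R
    _ ≤ ⨍⁻ _ in Ioc 0 (2 * π), ε ∂volume :=
        lintegral_mono fun θ => hRε _ (by simp [abs_of_nonneg hR])
    _ = ε := setLAverage_const (by simp [pi_pos]) measure_Ioc_lt_top.ne ε

lemma integral_eq_zero_of_differentiable_comp_add {f : V → F} (hc : Continuous f)
    (hf : Integrable f μ) {u : ℂ →ₗ[ℝ] V} (hu : Function.Injective u)
    (hd : ∀ t, Differentiable ℂ fun w => f (t + u w)) : ∫ t, f t ∂μ = 0 := by
  have := isFiniteMeasure_withDensity hf.2.ne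
  have hν : μ.withDensity (‖f ·‖ₑ) = 0 := by
    by_contra hne
    obtain ⟨K, hK, hKne⟩ := Measure.InnerRegular.exists_isCompact_not_null.2 hne
    exact hKne <| (withDensity_apply _ hK.measurableSet).trans <|
      setLIntegral_enorm_eq_zero_of_differentiable_comp_add hc hf hu hd hK
  refine integral_eq_zero_of_ae ?_
  filter_upwards [withDensity_eq_zero hc.enorm.aemeasurable hν] with t ht
  simpa using ht

end Vanishing

section Decomposition

variable {V W : Type*} [AddCommGroup V] [Module ℝ V] [FiniteDimensional ℝ V]
  [AddCommGroup W] [Module ℂ W] [FiniteDimensional ℂ W]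

lemma exists_injective_map_eq_smul_of_not_surjective
    (hdim : Module.finrank ℂ W ≤ Module.finrank ℝ V) {φ : V →ₗ[ℝ] W} (hφ : Function.Injective φ)
    (hsurj : ¬ ∀ z, ∃ s s', φ s + I • φ s' = z) :
    ∃ (u : ℂ →ₗ[ℝ] V) (v : W), Function.Injective u ∧ ∀ w, φ (u w) = w • v := by
  have : FiniteDimensional ℝ W := FiniteDimensional.complexToReal W
  let L : V × V →ₗ[ℝ] W := φ.coprod ((LinearMap.lsmul ℂ W I).restrictScalars ℝ ∘ₗ φ)
  have hL : ¬ Function.Injective L := fun hinj => hsurj fun z => by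
    have hle : Module.finrank ℝ W ≤ Module.finrank ℝ (V × V) := by
      rw [finrank_real_of_complex, Module.finrank_prod]
      lia
    obtain ⟨p, hp⟩ := (LinearMap.injective_iff_surjective_of_finrank_eq_finrank
      (hle.antisymm' (LinearMap.finrank_le_finrank_of_injective hinj))).1 hinj z
    exact ⟨p.1, p.2, by simpa [L] using hp⟩
  obtain ⟨⟨s, s'⟩, hker, hne⟩ : ∃ p, L p = 0 ∧ p ≠ 0 := by
    simpa [injective_iff_map_eq_zero] using hL
  replace hker : φ s + I • φ s' = 0 := by simpa [L] using hker
  let u : ℂ →ₗ[ℝ] V := reLm.smulRight s' - imLm.smulRight s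
  have hu (w : ℂ) : φ (u w) = w • φ s' := by
    simp only [u, LinearMap.sub_apply, LinearMap.smulRight_apply, map_sub, map_smul, reLm_coe,
      imLm_coe, eq_neg_of_add_eq_zero_left hker]
    conv_rhs => rw [← re_add_im w, add_smul, mul_smul, coe_smul, coe_smul]
    simp
  refine ⟨u, φ s', (injective_iff_map_eq_zero u).2 fun w hw => ?_, hu⟩
  refine (smul_eq_zero.1 ((hu w).symm.trans (by simp [hw]))).resolve_right fun hs' => hne ?_
  simp_all [map_eq_zero_iff φ hφ]

end Decomposition

section UniformBound

variable {V W : Type*} [AddCommGroup V] [Module ℝ V]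
  [MeasurableSpace V] [MeasurableAdd V] {μ : Measure V} [μ.IsAddRightInvariant]
  [NormedAddCommGroup W] [NormedSpace ℝ W] [FiniteDimensional ℝ W]

lemma exists_lintegral_add_le_of_isCompact {E : Submodule ℝ W} {φ : V →ₗ[ℝ] W}
    (hE : Codisjoint E (LinearMap.range φ)) {f : W → ℝ≥0∞}
    (hf : ∀ K : Set W, IsCompact K → K ⊆ E → ∃ C < ⊤, ∀ a ∈ K, ∫⁻ t, f (a + φ t) ∂μ ≤ C)
    {K : Set W} (hK : IsCompact K) : ∃ C < ⊤, ∀ z ∈ K, ∫⁻ t, f (z + φ t) ∂μ ≤ C := by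
  obtain ⟨r, hr⟩ := (E.subtype.coprod φ).exists_rightInverse_of_surjective (by
    rw [LinearMap.range_coprod, E.range_subtype, hE.eq_top])
  have hr' (z : W) : (r z).1 + φ (r z).2 = z := by simpa using LinearMap.congr_fun hr z
  have hcont : Continuous fun z => ((r z).1 : W) :=
    (E.subtype ∘ₗ LinearMap.fst ℝ E V ∘ₗ r).continuous_of_finiteDimensional
  obtain ⟨C, hC, hb⟩ := hf _ (hK.image hcont) (by rintro _ ⟨z, -, rfl⟩; exact (r z).1.2)
  refine ⟨C, hC, fun z hz => ?_⟩
  calc ∫⁻ t, f (z + φ t) ∂μ = ∫⁻ t, f ((r z).1 + φ (t + (r z).2)) ∂μ := by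
        simp_rw [map_add, add_comm (φ _) (φ (r z).2), ← add_assoc, hr']
    _ = ∫⁻ t, f ((r z).1 + φ t) ∂μ :=
        lintegral_add_right_eq_self (fun t => f ((r z).1 + φ t)) (r z).2
    _ ≤ C := hb _ (mem_image_of_mem _ hz)

end UniformBound

section Invariance

variable {V W F : Type*} [NormedAddCommGroup V] [NormedSpace ℝ V] [FiniteDimensional ℝ V]
  [MeasurableSpace V] [BorelSpace V] {μ : Measure V} [μ.IsAddHaarMeasure]
  [NormedAddCommGroup W] [NormedSpace ℂ W]
  [NormedAddCommGroup F] [NormedSpace ℂ F] [CompleteSpace F]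

lemma integral_add_I_smul_eq {φ : V →ₗ[ℝ] W} {Ψ : W → F} (hΨ : Differentiable ℂ Ψ)
    (hK : ∀ K : Set W, IsCompact K → ∃ C < ⊤, ∀ z ∈ K, ∫⁻ t, ‖Ψ (z + φ t)‖ₑ ∂μ ≤ C)
    (z : W) (s : V) : ∫ t, Ψ (z + I • φ s + φ t) ∂μ = ∫ t, Ψ (z + φ t) ∂μ := by
  have hφ : Continuous φ := φ.continuous_of_finiteDimensional
  have hc := hΨ.continuous
  obtain ⟨C, hC, hb⟩ := hK ((fun y : ℝ => z + ((y : ℂ) * I) • φ s) '' Icc 0 1)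
    (isCompact_Icc.image (by fun_prop))
  have h := integral_I_eq_integral_zero_of_translation (μ := μ) (s := s)
    (g := fun w t => Ψ (z + w • φ s + φ t)) (by simp only [Function.uncurry_def]; fun_prop)
    (fun t => by fun_prop) (fun w x t => ?_) hC fun y hy => hb _ (mem_image_of_mem _ hy)
  · simpa using h
  · simp only [map_add, map_smul, add_smul, coe_smul]
    congr 1
    abel

lemma integral_add_eq_zero_of_map_eq_smul {φ : V →ₗ[ℝ] W} {Ψ : W → F} (hΨ : Differentiable ℂ Ψ)
    {z : W} (hint : Integrable (fun t => Ψ (z + φ t)) μ) {u : ℂ →ₗ[ℝ] V}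
    (hu : Function.Injective u) {v : W} (hv : ∀ w, φ (u w) = w • v) :
    ∫ t, Ψ (z + φ t) ∂μ = 0 := by
  have hφ : Continuous φ := φ.continuous_of_finiteDimensional
  have hc := hΨ.continuous
  refine integral_eq_zero_of_differentiable_comp_add (by fun_prop) hint hu fun t => ?_
  simp only [map_add, hv]
  fun_prop

theorem contour_shift_invariance_general [FiniteDimensional ℂ W]
    (hdim : Module.finrank ℂ W ≤ Module.finrank ℝ V) {E : Submodule ℝ W}
    {φ : V →ₗ[ℝ] W} (hφ : Function.Injective φ) (hE : Codisjoint E (LinearMap.range φ))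
    {Ψ : W → F} (hΨ : Differentiable ℂ Ψ)
    (hK : ∀ K : Set W, IsCompact K → K ⊆ E →
      ∃ C < ⊤, ∀ a ∈ K, ∫⁻ t, ‖Ψ (a + φ t)‖ₑ ∂μ ≤ C) (a b : W) :
    ∫ t, Ψ (a + φ t) ∂μ = ∫ t, Ψ (b + φ t) ∂μ := by
  have : FiniteDimensional ℝ W := FiniteDimensional.complexToReal W
  have hbdd (K : Set W) (hKc : IsCompact K) :=
    exists_lintegral_add_le_of_isCompact (μ := μ) (f := fun z => ‖Ψ z‖ₑ) hE hK hKc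
  by_cases hsurj : ∀ z, ∃ s s', φ s + I • φ s' = z
  · obtain ⟨s, s', hs⟩ := hsurj (b - a)
    calc ∫ t, Ψ (a + φ t) ∂μ = ∫ t, Ψ (a + I • φ s' + φ t) ∂μ :=
          (integral_add_I_smul_eq hΨ hbdd a s').symm
      _ = ∫ t, Ψ (a + I • φ s' + φ (t + s)) ∂μ :=
          (integral_add_right_eq_self (fun t => Ψ (a + I • φ s' + φ t)) s).symm
      _ = ∫ t, Ψ (b + φ t) ∂μ := by
          rw [sub_eq_iff_eq_add'.1 hs.symm]
          simp only [map_add]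
          congr! 3
          abel
  · obtain ⟨u, v, hu, hv⟩ := exists_injective_map_eq_smul_of_not_surjective hdim hφ hsurj
    have hzero (z : W) : ∫ t, Ψ (z + φ t) ∂μ = 0 := by
      obtain ⟨C, hC, hb⟩ := hbdd {z} isCompact_singleton
      have hφc : Continuous φ := φ.continuous_of_finiteDimensional
      have hΨc := hΨ.continuous
      exact integral_add_eq_zero_of_map_eq_smul hΨ
        ⟨Continuous.aestronglyMeasurable (by fun_prop), (hb z rfl).trans_lt hC⟩ hu hv
    rw [hzero, hzero]

end Invariance

theorem contour_shift_invariance (n : ℕ) (E : Submodule ℝ (Fin n → ℂ))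
    (hE : Module.finrank ℝ E = n)
    (φ : (Fin n → ℝ) →ₗ[ℝ] (Fin n → ℂ)) (hφ : Function.Injective φ)
    (hcompl : IsCompl E (LinearMap.range φ))
    (Ψ : (Fin n → ℂ) → ℂ) (hΨ : Differentiable ℂ Ψ)
    (hK : ∀ K : Set (Fin n → ℂ), IsCompact K → K ⊆ (E : Set (Fin n → ℂ)) →
      ∃ C : ENNReal, C < ⊤ ∧ ∀ a ∈ K,
        (∫⁻ t : Fin n → ℝ, (‖Ψ (a + φ t)‖₊ : ENNReal)) ≤ C) :
    ∀ a ∈ E, ∀ b ∈ E,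
      (∫ t : Fin n → ℝ, Ψ (a + φ t)) = ∫ t : Fin n → ℝ, Ψ (b + φ t) :=
  fun a _ b _ => contour_shift_invariance_general (by simp) hφ hcompl.codisjoint hΨ hK a b
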